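/- Suppose there exist constants C > 0 and C_u > 0 such that for every multi-index α ∈ ℕ^d one has ‖∂^α u‖_{L²(D)} ≤ C_u · C^{|α|} · max{|α|, k}^{|α|}. Then u is real-analytic on D, and there exists a constant c > 0 depending only on d (in particular independent of k and C_u) such that for every x₀ ∈ D the Taylor series of u at x₀ has radius of convergence at least c/C. -/

import Mathlib

open MeasureTheory

/-- Partial derivative of a function `ℝ^d → ℂ` in the `i`-th coordinate direction. -/
noncomputable def pderivDir (d : ℕ) (i : Fin d) (f : EuclideanSpace ℝ (Fin d) → ℂ) :
    EuclideanSpace ℝ (Fin d) → ℂ :=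
  fun x => fderiv ℝ f x (EuclideanSpace.single i 1)

/-- Iterated partial derivatives along a list of coordinate directions. -/
noncomputable def pderivList (d : ℕ) :
    List (Fin d) → (EuclideanSpace ℝ (Fin d) → ℂ) → EuclideanSpace ℝ (Fin d) → ℂ
  | [], f => f
  | i :: l, f => pderivDir d i (pderivList d l f)

/-- The iterated partial derivative `∂^α` for a multi-index `α : Fin d → ℕ`,
taken in the canonical coordinate order. -/
noncomputable def partialDerivMulti (d : ℕ) (α : Fin d → ℕ)
    (f : EuclideanSpace ℝ (Fin d) → ℂ) : EuclideanSpace ℝ (Fin d) → ℂ :=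
  pderivList d ((List.finRange d).flatMap fun i => List.replicate (α i) i) f

open scoped Nat ContDiff Topology ENNReal

lemma aux_line {E : Type*} [NormedAddCommGroup E] [NormedSpace ℝ E] {u : E → ℂ}
    (hu : ContDiff ℝ (⊤ : ℕ∞) u) (x y : E) (n : ℕ) :
    iteratedDeriv n (fun t : ℝ => u (x + t • y)) =
      fun t => iteratedFDeriv ℝ n u (x + t • y) (fun _ => y) := by
  induction n with
  | zero => ext t; simp
  | succ n ih =>
    rw [iteratedDeriv_succ, ih]
    ext t
    have h1 : DifferentiableAt ℝ (iteratedFDeriv ℝ n u) (x + t • y) :=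
      (hu.differentiable_iteratedFDeriv (by exact_mod_cast WithTop.coe_lt_top _)) _
    have h2 : HasDerivAt (fun t : ℝ => x + t • y) y t := by
      simpa using ((hasDerivAt_id t).smul_const y).const_add x
    have h3 := h1.hasFDerivAt.comp_hasDerivAt t h2
    have h4 := ((ContinuousMultilinearMap.apply ℝ (fun _ : Fin n => E) ℂ
      (fun _ => y)).hasFDerivAt).comp_hasDerivAt t h3
    have h5 := h4.deriv
    rw [iteratedFDeriv_succ_apply_left]
    exact h5

lemma aux_taylor {E : Type*} [NormedAddCommGroup E] [NormedSpace ℝ E] {u : E → ℂ}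
    (hu : ContDiff ℝ (⊤ : ℕ∞) u) (x₀ : E) {r A R : ℝ} (hr : 0 < r) (_hA : 0 ≤ A) (hR : 0 < R)
    (h : ∀ x ∈ Metric.ball x₀ r, ∀ n : ℕ, ‖iteratedFDeriv ℝ n u x‖ ≤ A * R ^ n * n !) :
    ∃ p : FormalMultilinearSeries ℝ E ℂ,
      HasFPowerSeriesAt u p x₀ ∧ ENNReal.ofReal (1 / R) ≤ p.radius := by
  set p : FormalMultilinearSeries ℝ E ℂ := fun n => ((n ! : ℝ)⁻¹) • iteratedFDeriv ℝ n u x₀ with hp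
  have hpn : ∀ n, ‖p n‖ ≤ A * R ^ n := by
    intro n
    have h1 := h x₀ (Metric.mem_ball_self hr) n
    have h2 : (0 : ℝ) < n ! := by positivity
    simp only [hp, norm_smul, norm_inv, Real.norm_natCast]
    rw [inv_mul_le_iff₀ h2]; linarith
  have hrad : ENNReal.ofReal (1 / R) ≤ p.radius := by
    refine p.le_radius_of_bound A (r := (1 / R).toNNReal) fun n => ?_
    rw [Real.coe_toNNReal _ (by positivity)]
    calc _ ≤ A * R ^ n * (1 / R) ^ n := by gcongr; exact hpn n
      _ = A := by rw [mul_assoc, ← mul_pow, mul_one_div_cancel hR.ne']; simp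
  refine ⟨p, ⟨ENNReal.ofReal (min r (1 / R)), ?_⟩, hrad⟩
  have hm : 0 < min r (1 / R) := lt_min hr (by positivity)
  refine ⟨(ENNReal.ofReal_le_ofReal (min_le_right _ _)).trans hrad, by simpa using hm, ?_⟩
  intro y hy
  rw [Metric.eball_ofReal, mem_ball_zero_iff, lt_min_iff] at hy
  obtain ⟨hy1, hy2⟩ := hy
  have hq : R * ‖y‖ < 1 := by rwa [lt_div_iff₀ hR, mul_comm] at hy2
  have hq0 : 0 ≤ R * ‖y‖ := by positivity
  have hsum : Summable fun n => p n (fun _ => y) := by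
    refine Summable.of_norm_bounded (g := fun n => A * (R * ‖y‖) ^ n)
      ((summable_geometric_of_lt_one hq0 hq).mul_left A) fun n => ?_
    refine ((p n).le_of_opNorm_le (hpn n) _).trans (le_of_eq ?_)
    simp [mul_pow, mul_assoc]
  refine (hsum.hasSum_iff_tendsto_nat).2 ?_
  rw [← Filter.tendsto_add_atTop_iff_nat 1]
  set g : ℝ → ℂ := fun t => u (x₀ + t • y) with hg
  have hgs : ContDiff ℝ (⊤ : ℕ∞) g := by
    refine hu.comp ?_
    fun_prop
  have hid : ∀ n, ∀ t ∈ Set.Icc (0:ℝ) 1, iteratedDerivWithin n g (Set.Icc 0 1) t =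
      iteratedFDeriv ℝ n u (x₀ + t • y) (fun _ => y) := by
    intro n t ht
    rw [iteratedDerivWithin_eq_iteratedDeriv (uniqueDiffOn_Icc one_pos)
      ((hgs.of_le (by exact_mod_cast le_top)).contDiffAt) ht, hg, aux_line hu]
  have hbd : ∀ n : ℕ, ‖u (x₀ + y) - ∑ i ∈ Finset.range (n + 1), p i (fun _ => y)‖ ≤
      A * ((n + 1 : ℕ) * (R * ‖y‖) ^ (n + 1)) := by
    intro n
    have := taylor_mean_remainder_bound (f := g) (a := 0) (b := 1) (x := 1) (n := n)
      (C := A * R ^ (n + 1) * (n + 1)! * ‖y‖ ^ (n + 1)) zero_le_one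
      ((hgs.of_le (by exact_mod_cast le_top)).contDiffOn) (by simp) (by
        intro t ht
        rw [hid _ t ht]
        refine (ContinuousMultilinearMap.le_of_opNorm_le (h _ ?_ (n + 1)) (fun _ => y)).trans (le_of_eq ?_)
        · rw [mem_ball_iff_norm, add_sub_cancel_left, norm_smul]
          have : ‖t‖ ≤ 1 := by rw [Real.norm_of_nonneg ht.1]; exact ht.2
          nlinarith [norm_nonneg y]
        · simp)
    rw [taylor_within_apply] at this
    have e1 : ∑ k ∈ Finset.range (n + 1), (((k ! : ℝ)⁻¹ * (1 - 0) ^ k) •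
        iteratedDerivWithin k g (Set.Icc 0 1) 0) = ∑ i ∈ Finset.range (n + 1), p i (fun _ => y) := by
      refine Finset.sum_congr rfl fun k _ => ?_
      rw [hid k 0 (by simp)]
      simp [hp]
    rw [e1] at this
    simp only [hg, one_smul] at this
    refine this.trans (le_of_eq ?_)
    have : ((n ! : ℕ) : ℝ) ≠ 0 := by positivity
    rw [Nat.factorial_succ]; push_cast; field_simp; ring
  have hlim : Filter.Tendsto (fun n : ℕ => A * ((n + 1 : ℕ) * (R * ‖y‖) ^ (n + 1)))
      Filter.atTop (𝓝 0) := by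
    have := (tendsto_self_mul_const_pow_of_lt_one hq0 hq)
    have := ((Filter.tendsto_add_atTop_iff_nat 1).2 this).const_mul A
    simpa using this
  rw [tendsto_iff_norm_sub_tendsto_zero]
  refine squeeze_zero (fun _ => norm_nonneg _) (fun n => ?_) hlim
  rw [norm_sub_rev]; exact hbd n

lemma aux_pderivList_eq {d : ℕ} {u : EuclideanSpace ℝ (Fin d) → ℂ}
    (hu : ContDiff ℝ (⊤ : ℕ∞) u) (l : List (Fin d)) :
    pderivList d l u = fun x => iteratedFDeriv ℝ l.length u x
      (fun i => EuclideanSpace.single (l.get i) 1) := by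
  induction l with
  | nil => ext x; simp [pderivList]
  | cons i l ih =>
    ext x
    rw [pderivList, ih, pderivDir]
    have h1 : DifferentiableAt ℝ (iteratedFDeriv ℝ l.length u) x :=
      (hu.differentiable_iteratedFDeriv (by exact_mod_cast WithTop.coe_lt_top _)) _
    have h4 := ((ContinuousMultilinearMap.apply ℝ (fun _ : Fin l.length =>
      EuclideanSpace ℝ (Fin d)) ℂ
      (fun i => EuclideanSpace.single (l.get i) 1)).hasFDerivAt).comp x h1.hasFDerivAt
    have h5 := h4.fderiv
    simp only [List.length_cons]
    rw [iteratedFDeriv_succ_apply_left]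
    have h6 := congrArg (fun L => L (EuclideanSpace.single i (1:ℝ))) h5
    exact h6

lemma aux_pderivDir_smooth {d : ℕ} {u : EuclideanSpace ℝ (Fin d) → ℂ}
    (hu : ContDiff ℝ (⊤ : ℕ∞) u) (i : Fin d) : ContDiff ℝ (⊤ : ℕ∞) (pderivDir d i u) := by
  unfold pderivDir
  exact (hu.fderiv_right (m := (⊤ : ℕ∞)) (by simp)).clm_apply contDiff_const

lemma aux_pderivList_smooth {d : ℕ} {u : EuclideanSpace ℝ (Fin d) → ℂ}
    (hu : ContDiff ℝ (⊤ : ℕ∞) u) (l : List (Fin d)) :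
    ContDiff ℝ (⊤ : ℕ∞) (pderivList d l u) := by
  induction l with
  | nil => exact hu
  | cons i l ih => exact aux_pderivDir_smooth ih i

lemma aux_pderivDir_comm {d : ℕ} {u : EuclideanSpace ℝ (Fin d) → ℂ}
    (hu : ContDiff ℝ (⊤ : ℕ∞) u) (i j : Fin d) :
    pderivDir d i (pderivDir d j u) = pderivDir d j (pderivDir d i u) := by
  have key : ∀ i j x, pderivDir d i (pderivDir d j u) x =
      fderiv ℝ (fderiv ℝ u) x (EuclideanSpace.single i 1) (EuclideanSpace.single j 1) := by
    intro i j x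
    have h1 : DifferentiableAt ℝ (fderiv ℝ u) x :=
      ((hu.fderiv_right (m := (⊤ : ℕ∞)) (by simp)).differentiable (by simp)) x
    have h4 := ((ContinuousLinearMap.apply ℝ ℂ
      (EuclideanSpace.single j (1:ℝ))).hasFDerivAt).comp x h1.hasFDerivAt
    exact congrArg (fun L => L (EuclideanSpace.single i (1:ℝ))) h4.fderiv
  ext x
  rw [key, key]
  exact (hu.contDiffAt.isSymmSndFDerivAt (by simp only [minSmoothness_of_isRCLikeNormedField]; exact WithTop.coe_le_coe.2 le_top)) _ _

lemma aux_pderivList_perm {d : ℕ} {u : EuclideanSpace ℝ (Fin d) → ℂ}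
    (hu : ContDiff ℝ (⊤ : ℕ∞) u) {l l' : List (Fin d)} (h : l.Perm l') :
    pderivList d l u = pderivList d l' u := by
  induction h with
  | nil => rfl
  | cons i _ ih => simp only [pderivList, ih]
  | swap i j l => exact aux_pderivDir_comm (aux_pderivList_smooth hu l) _ _
  | trans _ _ h1 h2 => exact h1.trans h2

lemma aux_canon_perm {d : ℕ} (l : List (Fin d)) :
    l.Perm ((List.finRange d).flatMap fun i => List.replicate (l.count i) i) := by
  rw [List.perm_iff_count]
  intro a
  rw [List.count_flatMap]
  have : (List.count a ∘ fun i => List.replicate (l.count i) i) =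
      fun i => if i = a then l.count a else 0 := by
    ext i
    simp only [Function.comp, List.count_replicate]
    by_cases h : i = a
    · subst h; simp
    · simp [h]
  rw [this, ← List.ofFn_eq_map, List.sum_ofFn]
  simp

lemma aux_count_sum {d : ℕ} (l : List (Fin d)) : ∑ i, l.count i = l.length := by
  rw [(aux_canon_perm l).length_eq, List.length_flatMap, ← List.ofFn_eq_map, List.sum_ofFn]
  simp

lemma aux_pderivList_multi {d : ℕ} {u : EuclideanSpace ℝ (Fin d) → ℂ}
    (hu : ContDiff ℝ (⊤ : ℕ∞) u) (l : List (Fin d)) :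
    pderivList d l u = partialDerivMulti d (fun i => l.count i) u :=
  aux_pderivList_perm hu (aux_canon_perm l)

lemma aux_pderivList_congr {d : ℕ} {u v : EuclideanSpace ℝ (Fin d) → ℂ}
    {U : Set (EuclideanSpace ℝ (Fin d))} (hU : IsOpen U) (h : Set.EqOn u v U) (l : List (Fin d)) :
    Set.EqOn (pderivList d l u) (pderivList d l v) U := by
  induction l with
  | nil => exact h
  | cons i l ih =>
    intro x hx
    simp only [pderivList, pderivDir]
    rw [(ih.eventuallyEq_of_mem (hU.mem_nhds hx)).fderiv_eq]

lemma aux_opNorm_le {d n : ℕ}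
    (M : ContinuousMultilinearMap ℝ (fun _ : Fin n => EuclideanSpace ℝ (Fin d)) ℂ) :
    ‖M‖ ≤ ∑ r : Fin n → Fin d, ‖M (fun i => EuclideanSpace.single (r i) 1)‖ := by
  refine M.opNorm_le_bound (by positivity) fun m => ?_
  have hm : m = fun i => ∑ j, (m i j) • (EuclideanSpace.single j (1:ℝ)) := by
    ext i k
    simp [Pi.single_apply]
  conv_lhs => rw [hm]
  rw [ContinuousMultilinearMap.map_sum]
  refine (norm_sum_le _ _).trans ?_
  rw [Finset.sum_mul]
  refine Finset.sum_le_sum fun r _ => ?_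
  rw [ContinuousMultilinearMap.map_smul_univ, norm_smul, mul_comm, norm_prod]
  gcongr with i
  exact PiLp.norm_apply_le (m i) (r i)

lemma aux_iter_le {d : ℕ} {u : EuclideanSpace ℝ (Fin d) → ℂ}
    (hu : ContDiff ℝ (⊤ : ℕ∞) u) (n : ℕ) (x : EuclideanSpace ℝ (Fin d)) :
    ‖iteratedFDeriv ℝ n u x‖ₑ ≤ ∑ r : Fin n → Fin d,
      ‖partialDerivMulti d (fun i => (List.ofFn r).count i) u x‖ₑ := by
  have h := aux_opNorm_le (iteratedFDeriv ℝ n u x)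
  have h2 : ∀ r : Fin n → Fin d, iteratedFDeriv ℝ n u x (fun i => EuclideanSpace.single (r i) 1) =
      partialDerivMulti d (fun i => (List.ofFn r).count i) u x := by
    intro r
    rw [← aux_pderivList_multi hu, aux_pderivList_eq hu]
    have : ∀ (m : ℕ) (hm : m = n) , iteratedFDeriv ℝ n u x (fun i => EuclideanSpace.single (r i) 1)
      = iteratedFDeriv ℝ m u x (fun i => EuclideanSpace.single (r (Fin.cast hm i)) 1) := by
      rintro m rfl; rfl
    rw [this _ (List.length_ofFn (f := r))]
    simp [Fin.cast]
  simp only [h2] at h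
  have h3 := ENNReal.ofReal_le_ofReal h
  rw [ENNReal.ofReal_sum_of_nonneg (fun _ _ => norm_nonneg _)] at h3
  simpa only [ofReal_norm] using h3

lemma aux_one_dim {F : Type*} [NormedAddCommGroup F] [NormedSpace ℝ F] [CompleteSpace F]
    {g g' : ℝ → F} (hg : ∀ t, HasDerivAt g (g' t) t) (hg' : Continuous g') {a b t : ℝ}
    (hab : a < b) (ht : t ∈ Set.Icc a b) :
    ‖g t‖ₑ ≤ (1 + (ENNReal.ofReal (b - a))⁻¹) * ∫⁻ s in Set.Icc a b, (‖g s‖ₑ + ‖g' s‖ₑ) := by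
  have hgc : Continuous g := continuous_iff_continuousAt.2 fun t => (hg t).continuousAt
  set J := ∫⁻ s in Set.Icc a b, ‖g' s‖ₑ with hJ
  set I := ∫⁻ s in Set.Icc a b, ‖g s‖ₑ with hI
  have h1 : ∀ s ∈ Set.Icc a b, ‖g t‖ₑ ≤ ‖g s‖ₑ + J := by
    intro s hs
    have e : g t = g s + ∫ x in s..t, g' x := by
      rw [intervalIntegral.integral_eq_sub_of_hasDerivAt (fun x _ => hg x)
        (hg'.intervalIntegrable _ _)]
      abel
    rw [e]
    refine (enorm_add_le _ _).trans ?_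
    gcongr
    rw [← ofReal_norm, intervalIntegral.norm_intervalIntegral_eq, ofReal_norm]
    refine (enorm_integral_le_lintegral_enorm _).trans ?_
    refine lintegral_mono_set ?_
    exact Set.uIoc_subset_uIcc.trans (Set.uIcc_subset_Icc hs ht)
  have h2 : ‖g t‖ₑ * ENNReal.ofReal (b - a) ≤ I + J * ENNReal.ofReal (b - a) := by
    have := setLIntegral_mono' (μ := volume) measurableSet_Icc h1
    rwa [lintegral_add_left (hgc.enorm.measurable), setLIntegral_const, setLIntegral_const,
      Real.volume_Icc] at this
  have hp : ENNReal.ofReal (b - a) ≠ 0 := by simpa using hab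
  have hp' : ENNReal.ofReal (b - a) ≠ ⊤ := ENNReal.ofReal_ne_top
  set p := ENNReal.ofReal (b - a)
  rw [lintegral_add_left (hgc.enorm.measurable)]
  calc ‖g t‖ₑ = ‖g t‖ₑ * p * p⁻¹ := by rw [mul_assoc, ENNReal.mul_inv_cancel hp hp', mul_one]
    _ ≤ (I + J * p) * p⁻¹ := by gcongr
    _ = p⁻¹ * I + J := by
      rw [add_mul, mul_assoc, ENNReal.mul_inv_cancel hp hp', mul_one, mul_comm]
    _ ≤ (1 + p⁻¹) * I + (1 + p⁻¹) * J := by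
      gcongr
      · exact le_add_self
      · exact le_mul_of_one_le_left' le_self_add
    _ = _ := by rw [mul_add]

lemma aux_marginal {d : ℕ} {a b : Fin d → ℝ} (W : ℕ → (Fin d → ℝ) → ℝ≥0∞)
    (hWm : ∀ m, Measurable (W m)) (K : ℝ≥0∞)
    (hW : ∀ m i, ∀ x ∈ Set.pi Set.univ (fun i => Set.Icc (a i) (b i)),
      W m x ≤ K * ∫⁻ t in Set.Icc (a i) (b i), W (m + 1) (Function.update x i t))
    (s : Finset (Fin d)) :
    ∀ m, ∀ x ∈ Set.pi Set.univ (fun i => Set.Icc (a i) (b i)),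
      W m x ≤ K ^ s.card * lmarginal (fun i => volume.restrict (Set.Icc (a i) (b i))) s
        (W (m + s.card)) x := by
  induction s using Finset.induction_on with
  | empty => intro m x hx; simp
  | insert i s hi ih =>
    intro m x hx
    rw [lmarginal_insert _ (hWm _) hi, Finset.card_insert_of_notMem hi]
    refine (hW m i x hx).trans ?_
    rw [pow_succ', mul_assoc]
    gcongr
    rw [← lintegral_const_mul]
    · refine setLIntegral_mono' measurableSet_Icc fun t ht => ?_
      have := ih (m + 1) (Function.update x i t) (by
        intro j _
        by_cases hj : j = i
        · subst hj; simpa using ht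
        · simpa [hj] using hx j trivial)
      rwa [add_assoc, add_comm 1] at this
    · exact ((hWm _).lmarginal _).comp (measurable_update x)

lemma aux_sobolev {d : ℕ} {u : EuclideanSpace ℝ (Fin d) → ℂ}
    (hu : ContDiff ℝ (⊤ : ℕ∞) u) (z : Fin d → ℝ) {δ : ℝ} (hδ : 0 < δ) :
    ∃ K : ℝ≥0∞, K ≠ ⊤ ∧ ∀ n, ∀ x ∈ Metric.closedBall z δ,
      ‖iteratedFDeriv ℝ n u (WithLp.toLp 2 x)‖ₑ ≤ K * ∑ j ∈ Finset.range (d + 1),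
        ∫⁻ y in Metric.closedBall z δ, ‖iteratedFDeriv ℝ (n + j) u (WithLp.toLp 2 y)‖ₑ := by
  set K₀ : ℝ≥0∞ := (1 + (ENNReal.ofReal (2 * δ))⁻¹) with hK₀
  have hK₀t : K₀ ≠ ⊤ := by simp [hK₀, hδ]
  refine ⟨(K₀ * 2) ^ d, ENNReal.pow_ne_top (ENNReal.mul_ne_top hK₀t (by simp)), ?_⟩
  intro n
  have hbox : Metric.closedBall z δ = Set.pi Set.univ (fun i => Set.Icc (z i - δ) (z i + δ)) := by
    rw [closedBall_pi _ hδ.le]; simp [Real.closedBall_eq_Icc]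
  have hcont : ∀ j, Continuous (iteratedFDeriv ℝ j u) := fun j =>
    hu.continuous_iteratedFDeriv (by exact_mod_cast le_top)
  have hcontW : ∀ j, Continuous fun x : Fin d → ℝ =>
      ‖iteratedFDeriv ℝ j u (WithLp.toLp 2 x)‖ₑ := by
    intro j
    exact ((hcont j).comp (PiLp.continuous_toLp 2 _)).enorm
  have step : ∀ j (i : Fin d), ∀ x ∈ Set.pi Set.univ (fun i => Set.Icc (z i - δ) (z i + δ)),
      ‖iteratedFDeriv ℝ j u (WithLp.toLp 2 x)‖ₑ ≤ K₀ * ∫⁻ t in Set.Icc (z i - δ) (z i + δ),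
        (‖iteratedFDeriv ℝ j u (WithLp.toLp 2 (Function.update x i t))‖ₑ +
          ‖iteratedFDeriv ℝ (j+1) u (WithLp.toLp 2 (Function.update x i t))‖ₑ) := by
    intro j i x hx
    have hline : ∀ t : ℝ, (WithLp.toLp 2 (Function.update x i t) : EuclideanSpace ℝ (Fin d)) =
        WithLp.toLp 2 (Function.update x i 0) + t • EuclideanSpace.single i (1:ℝ) := by
      intro t
      ext k
      by_cases hk : k = i
      · subst hk; simp
      · simp [hk]
    have hder : ∀ t : ℝ, HasDerivAt
        (fun t => iteratedFDeriv ℝ j u (WithLp.toLp 2 (Function.update x i t)))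
        (fderiv ℝ (iteratedFDeriv ℝ j u) (WithLp.toLp 2 (Function.update x i t))
          (EuclideanSpace.single i (1:ℝ))) t := by
      intro t
      have h1 : DifferentiableAt ℝ (iteratedFDeriv ℝ j u)
          (WithLp.toLp 2 (Function.update x i t)) :=
        (hu.differentiable_iteratedFDeriv (by exact_mod_cast WithTop.coe_lt_top _)) _
      have h2 : HasDerivAt (fun t : ℝ => (WithLp.toLp 2 (Function.update x i t) :
          EuclideanSpace ℝ (Fin d))) (EuclideanSpace.single i (1:ℝ)) t := by
        rw [funext hline]
        simpa using ((hasDerivAt_id t).smul_const (EuclideanSpace.single i (1:ℝ))).const_add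
          (WithLp.toLp 2 (Function.update x i 0))
      exact h1.hasFDerivAt.comp_hasDerivAt t h2
    have hc : Continuous fun t : ℝ => fderiv ℝ (iteratedFDeriv ℝ j u)
        (WithLp.toLp 2 (Function.update x i t)) (EuclideanSpace.single i (1:ℝ)) := by
      have h3 : ContDiff ℝ 1 (iteratedFDeriv ℝ j u) :=
        hu.iteratedFDeriv_right (by exact_mod_cast le_top)
      have h4 := h3.continuous_fderiv (by simp)
      have h5 : Continuous fun t : ℝ => (WithLp.toLp 2 (Function.update x i t) :
          EuclideanSpace ℝ (Fin d)) := by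
        rw [funext hline]; fun_prop
      exact (h4.comp h5).clm_apply continuous_const
    have := aux_one_dim hder hc (a := z i - δ) (b := z i + δ) (t := x i) (by linarith)
      (hx i trivial)
    rw [Function.update_eq_self, show z i + δ - (z i - δ) = 2 * δ by ring] at this
    refine this.trans ?_
    gcongr with t
    rw [← ofReal_norm, ← ofReal_norm, ← norm_fderiv_iteratedFDeriv]
    refine ENNReal.ofReal_le_ofReal ?_
    refine (ContinuousLinearMap.le_opNorm _ _).trans (le_of_eq ?_)
    simp
  intro x hx
  have main := aux_marginal (a := fun i => z i - δ) (b := fun i => z i + δ)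
    (fun m x => ∑ j ∈ Finset.range (m + 1), ‖iteratedFDeriv ℝ (n + j) u (WithLp.toLp 2 x)‖ₑ)
    (fun m => Finset.measurable_sum _ fun j _ => (hcontW _).measurable) (K₀ * 2) ?_
    Finset.univ 0 x (hbox ▸ hx)
  · simp only [lmarginal_univ, Finset.card_univ, Fintype.card_fin, zero_add,
      Finset.range_one, Finset.sum_singleton] at main
    refine main.trans (le_of_eq ?_)
    rw [← Measure.restrict_pi_pi, ← hbox, lintegral_finsetSum _ fun j _ => (hcontW _).measurable]
    rfl
  · intro m i x hx
    calc _ ≤ ∑ j ∈ Finset.range (m + 1), K₀ * ∫⁻ t in Set.Icc (z i - δ) (z i + δ),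
        (‖iteratedFDeriv ℝ (n + j) u (WithLp.toLp 2 (Function.update x i t))‖ₑ +
          ‖iteratedFDeriv ℝ (n+j+1) u (WithLp.toLp 2 (Function.update x i t))‖ₑ) :=
          Finset.sum_le_sum fun j _ => step _ i x hx
      _ = K₀ * ∫⁻ t in Set.Icc (z i - δ) (z i + δ), ∑ j ∈ Finset.range (m + 1), 
        (‖iteratedFDeriv ℝ (n + j) u (WithLp.toLp 2 (Function.update x i t))‖ₑ +
          ‖iteratedFDeriv ℝ (n+j+1) u (WithLp.toLp 2 (Function.update x i t))‖ₑ) := by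
          rw [lintegral_finsetSum, Finset.mul_sum]
          intro j _
          exact (((hcontW _).measurable).comp (measurable_update x)).add
            (((hcontW _).measurable).comp (measurable_update x))
      _ ≤ K₀ * ∫⁻ t in Set.Icc (z i - δ) (z i + δ), 2 * ∑ j ∈ Finset.range (m + 1 + 1), 
        ‖iteratedFDeriv ℝ (n + j) u (WithLp.toLp 2 (Function.update x i t))‖ₑ := by
          gcongr with t
          rw [Finset.sum_add_distrib, two_mul]
          gcongr
          · exact Nat.le_succ _
          · rw [Finset.sum_range_succ' _ (m + 1)]
            exact le_self_add
      _ = _ := by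
          rw [lintegral_const_mul, mul_assoc]
          exact Finset.measurable_sum _ fun j _ => 
            (((hcontW _).measurable).comp (measurable_update x))

lemma aux_num (k : ℝ) (hk : 1 ≤ k) (j : ℕ) :
    max (j : ℝ) k ^ j ≤ 2 * Real.exp k * Real.exp 1 ^ j * j ! := by
  have hf : (0:ℝ) < j ! := by positivity
  have h1 : (j:ℝ) ^ j ≤ Real.exp j * j ! := by
    have := Real.pow_div_factorial_le_exp (x := (j:ℝ)) (by positivity) j
    rwa [div_le_iff₀ hf] at this
  have h2 : k ^ j ≤ Real.exp k * j ! := by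
    have := Real.pow_div_factorial_le_exp (x := k) (by positivity) j
    rwa [div_le_iff₀ hf] at this
  have h3 : Real.exp 1 ^ j = Real.exp j := by rw [← Real.exp_nat_mul, mul_one]
  rw [h3]
  have e1 : 1 ≤ Real.exp j := Real.one_le_exp (by positivity)
  have e2 : 1 ≤ Real.exp k := Real.one_le_exp (by positivity)
  have h5 : Real.exp j ≤ 2 * Real.exp k * Real.exp j := by nlinarith
  have h6 : Real.exp k ≤ 2 * Real.exp k * Real.exp j := by nlinarith
  rcases max_choice (j:ℝ) k with h | h <;> rw [h]
  · exact h1.trans (by gcongr)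
  · exact h2.trans (by gcongr)

lemma aux_num2 (k : ℝ) (hk : 1 ≤ k) (n i d : ℕ) (C Cu : ℝ) (hC : 0 < C) (hCu : 0 < Cu) :
    (d : ℝ) ^ (n + i) * (Cu * C ^ (n + i) * max ((n + i : ℕ) : ℝ) k ^ (n + i)) ≤
      (2 * Real.exp 1 * d * C) ^ n * n ! *
        (2 * Cu * Real.exp k * (2 * Real.exp 1 * d * C) ^ i * i !) := by
  have h1 := aux_num k hk (n + i)
  have h2 : (((n + i)! : ℕ) : ℝ) ≤ 2 ^ (n + i) * (n ! * i !) := by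
    have := Nat.add_choose_mul_factorial_mul_factorial n i
    have h3 := Nat.choose_le_two_pow (n + i) i
    rw [← this, mul_assoc]
    push_cast
    gcongr
    exact_mod_cast h3
  calc _ ≤ (d : ℝ) ^ (n + i) * (Cu * C ^ (n + i) * (2 * Real.exp k * Real.exp 1 ^ (n + i) *
        (2 ^ (n + i) * (n ! * i !)))) := by gcongr; exact h1.trans (by gcongr)
    _ = _ := by simp only [mul_pow, pow_add]; ring

lemma aux_L1 {d : ℕ} {u v : EuclideanSpace ℝ (Fin d) → ℂ} (hv : ContDiff ℝ (⊤ : ℕ∞) v)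
    {U D : Set (EuclideanSpace ℝ (Fin d))} (hU : IsOpen U) (hUD : U ⊆ D) (huv : Set.EqOn v u U)
    {z : Fin d → ℝ} {δ : ℝ} (hQ : ∀ y ∈ Metric.closedBall z δ, WithLp.toLp 2 y ∈ U) :
    ∃ V : ℝ≥0∞, V ≠ ⊤ ∧ ∀ α : Fin d → ℕ,
      ∫⁻ y in Metric.closedBall z δ, ‖partialDerivMulti d α v (WithLp.toLp 2 y)‖ₑ ≤
        eLpNorm (partialDerivMulti d α u) 2 (volume.restrict D) * V := by
  set S : Set (EuclideanSpace ℝ (Fin d)) := WithLp.ofLp ⁻¹' Metric.closedBall z δ with hS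
  have hSm : MeasurableSet S :=
    (Metric.isClosed_closedBall.preimage (PiLp.continuous_ofLp 2 _)).measurableSet
  have hSU : S ⊆ U := fun x hx => by simpa using hQ _ hx
  have hmp := PiLp.volume_preserving_toLp (Fin d)
  have hpre : (WithLp.toLp 2) ⁻¹' S = Metric.closedBall z δ := by ext; simp [hS]
  have hvol : volume S ≠ ⊤ := by
    rw [← hmp.measure_preimage hSm.nullMeasurableSet, hpre]
    exact measure_closedBall_lt_top.ne
  refine ⟨(volume.restrict S) Set.univ ^ (1 / (1:ℝ≥0∞).toReal - 1 / (2:ℝ≥0∞).toReal), ?_, ?_⟩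
  · refine ENNReal.rpow_ne_top_of_nonneg (by norm_num) (by simpa using hvol)
  intro α
  have hc : Continuous (partialDerivMulti d α v) := (aux_pderivList_smooth hv _).continuous
  rw [← hpre, hmp.setLIntegral_comp_preimage hSm (f := fun x => ‖partialDerivMulti d α v x‖ₑ)
    hc.enorm.measurable, ← eLpNorm_one_eq_lintegral_enorm]
  refine (eLpNorm_le_eLpNorm_mul_rpow_measure_univ (q := 2) (by norm_num)
    hc.aestronglyMeasurable).trans ?_
  gcongr
  have : eLpNorm (partialDerivMulti d α v) 2 (volume.restrict S) =
      eLpNorm (partialDerivMulti d α u) 2 (volume.restrict S) := by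
    refine eLpNorm_congr_ae ?_
    filter_upwards [ae_restrict_mem hSm] with x hx
    exact aux_pderivList_congr hU huv _ (hSU hx)
  rw [this]
  exact eLpNorm_mono_measure _ (Measure.restrict_mono (hSU.trans hUD) le_rfl)

lemma aux_bump {d : ℕ} {D : Set (EuclideanSpace ℝ (Fin d))} (hD : IsOpen D)
    {u : EuclideanSpace ℝ (Fin d) → ℂ} (hu : ContDiffOn ℝ (⊤ : ℕ∞) u D)
    {x₀ : EuclideanSpace ℝ (Fin d)} (hx₀ : x₀ ∈ D) :
    ∃ v : EuclideanSpace ℝ (Fin d) → ℂ, ContDiff ℝ (⊤ : ℕ∞) v ∧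
      ∃ U, IsOpen U ∧ x₀ ∈ U ∧ U ⊆ D ∧ Set.EqOn v u U := by
  obtain ⟨ε, hε, hεD⟩ := Metric.nhds_basis_closedBall.mem_iff.1 (hD.mem_nhds hx₀)
  let bmp : ContDiffBump x₀ := ⟨ε / 2, ε, by positivity, by linarith⟩
  refine ⟨fun x => bmp x • u x, ?_, Metric.ball x₀ (ε / 2), Metric.isOpen_ball,
    Metric.mem_ball_self (by positivity), ?_, ?_⟩
  · rw [contDiff_iff_contDiffAt]
    intro x
    by_cases hx : x ∈ D
    · exact bmp.contDiff.contDiffAt.smul ((hu x hx).contDiffAt (hD.mem_nhds hx))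
    · have hx' : x ∉ tsupport bmp := by
        rw [bmp.tsupport_eq]; exact fun h => hx (hεD h)
      have : (fun x => bmp x • u x) =ᶠ[𝓝 x] fun _ => 0 := by
        filter_upwards [notMem_tsupport_iff_eventuallyEq.1 hx'] with y hy
        simp [hy]
      exact contDiffAt_const.congr_of_eventuallyEq this
  · exact (Metric.ball_subset_closedBall.trans (Metric.closedBall_subset_closedBall
      (by linarith))).trans hεD
  · intro x hx
    have : bmp x = 1 := bmp.one_of_mem_closedBall (Metric.ball_subset_closedBall hx)
    simp [this]

lemma aux_point {d : ℕ} (hd : 1 ≤ d) {D : Set (EuclideanSpace ℝ (Fin d))} (hD : IsOpen D)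
    {k : ℝ} (hk : 1 ≤ k)
    {u : EuclideanSpace ℝ (Fin d) → ℂ} (hu : ContDiffOn ℝ (⊤ : ℕ∞) u D)
    {C Cu : ℝ} (hC : 0 < C) (hCu : 0 < Cu)
    (h : ∀ α : Fin d → ℕ,
        eLpNorm (partialDerivMulti d α u) 2 (volume.restrict D)
          ≤ ENNReal.ofReal
              (Cu * C ^ (∑ i, α i) * max ((∑ i, α i : ℕ) : ℝ) k ^ (∑ i, α i)))
    {x₀ : EuclideanSpace ℝ (Fin d)} (hx₀ : x₀ ∈ D) :
    ∃ p : FormalMultilinearSeries ℝ (EuclideanSpace ℝ (Fin d)) ℂ,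
      HasFPowerSeriesAt u p x₀ ∧
        ENNReal.ofReal (1 / (2 * Real.exp 1 * d * C)) ≤ p.radius := by
  obtain ⟨v, hv, U, hU, hxU, hUD, huv⟩ := aux_bump hD hu hx₀
  have hn : (WithLp.toLp 2) ⁻¹' U ∈ 𝓝 (WithLp.ofLp x₀) :=
    (hU.preimage (PiLp.continuous_toLp 2 _)).mem_nhds (by simpa using hxU)
  obtain ⟨δ, hδ, hδU⟩ := Metric.nhds_basis_closedBall.mem_iff.1 hn
  have hn2 : WithLp.ofLp ⁻¹' (Metric.closedBall (WithLp.ofLp x₀) δ) ∈ 𝓝 x₀ :=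
    (PiLp.continuous_ofLp 2 _).continuousAt.preimage_mem_nhds (Metric.closedBall_mem_nhds _ hδ)
  obtain ⟨r, hr, hrS⟩ := Metric.mem_nhds_iff.1 hn2
  obtain ⟨K, hK, hsob⟩ := aux_sobolev hv (WithLp.ofLp x₀) hδ
  obtain ⟨V, hV, hL1⟩ := aux_L1 (D := D) hv hU hUD huv (fun y hy => hδU hy)
  set R : ℝ := 2 * Real.exp 1 * d * C with hR
  have hdpos : (0:ℝ) < d := by exact_mod_cast hd
  have hRpos : 0 < R := by positivity
  set B : ℝ := ∑ i ∈ Finset.range (d + 1), 2 * Cu * Real.exp k * R ^ i * i ! with hB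
  have hBpos : 0 ≤ B := by positivity
  have hint : ∀ j, ∫⁻ y in Metric.closedBall (WithLp.ofLp x₀) δ,
      ‖iteratedFDeriv ℝ j v (WithLp.toLp 2 y)‖ₑ ≤
      ENNReal.ofReal ((d:ℝ) ^ j * (Cu * C ^ j * max (j : ℝ) k ^ j)) * V := by
    intro j
    have hmeas : ∀ α, Measurable fun y : Fin d → ℝ =>
        ‖partialDerivMulti d α v (WithLp.toLp 2 y)‖ₑ := fun α =>
      (((aux_pderivList_smooth hv _).continuous).comp (PiLp.continuous_toLp 2 _)).enorm.measurable
    refine (lintegral_mono fun y => aux_iter_le hv j (WithLp.toLp 2 y)).trans ?_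
    rw [lintegral_finsetSum _ fun r _ => hmeas _]
    have hb : ∀ r ∈ (Finset.univ : Finset (Fin j → Fin d)),
        ∫⁻ y in Metric.closedBall (WithLp.ofLp x₀) δ,
          ‖partialDerivMulti d (fun i => (List.ofFn r).count i) v (WithLp.toLp 2 y)‖ₑ ≤
        ENNReal.ofReal (Cu * C ^ j * max (j : ℝ) k ^ j) * V := by
      intro r _
      refine (hL1 _).trans ?_
      gcongr
      have := h (fun i => (List.ofFn r).count i)
      rwa [aux_count_sum, List.length_ofFn] at this
    refine (Finset.sum_le_card_nsmul _ _ _ hb).trans (le_of_eq ?_)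
    rw [ENNReal.ofReal_mul (p := (d:ℝ) ^ j) (by positivity),
      ENNReal.ofReal_pow (p := (d:ℝ)) (by positivity)]
    rw [ENNReal.ofReal_natCast, Finset.card_univ, Fintype.card_fun, Fintype.card_fin,
      Fintype.card_fin, nsmul_eq_mul, Nat.cast_pow, ← mul_assoc]
  have hfin : ∀ x ∈ Metric.ball x₀ r, ∀ n : ℕ,
      ‖iteratedFDeriv ℝ n v x‖ ≤ ((K * V).toReal * B) * R ^ n * n ! := by
    intro x hx n
    have h1 := hsob n (WithLp.ofLp x) (hrS hx)
    have h2 : ‖iteratedFDeriv ℝ n v x‖ₑ ≤ ENNReal.ofReal (((K * V).toReal * B) * R ^ n * n !) := by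
      refine h1.trans ?_
      calc _ ≤ K * ∑ i ∈ Finset.range (d + 1), ENNReal.ofReal (R ^ n * n ! *
            (2 * Cu * Real.exp k * R ^ i * i !)) * V := by
            gcongr with i hi
            refine (hint _).trans ?_
            refine mul_le_mul_left (ENNReal.ofReal_le_ofReal ?_) _
            exact aux_num2 k hk n i d C Cu hC hCu
        _ = (K * V) * ENNReal.ofReal (R ^ n * n ! * B) := by
            rw [← Finset.sum_mul, ← ENNReal.ofReal_sum_of_nonneg (fun _ _ => by positivity),
              ← Finset.mul_sum, ← hB]
            ring
        _ = _ := by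
            rw [show (K * V).toReal * B * R ^ n * n ! = (K * V).toReal * (R ^ n * n ! * B) by ring,
              ENNReal.ofReal_mul ENNReal.toReal_nonneg,
              ENNReal.ofReal_toReal (ENNReal.mul_ne_top hK hV)]
    rw [← ofReal_norm] at h2
    exact (ENNReal.ofReal_le_ofReal_iff (by positivity)).1 h2
  obtain ⟨p, hp, hrad⟩ := aux_taylor hv x₀ hr (by positivity) hRpos hfin
  exact ⟨p, hp.congr (huv.eventuallyEq_of_mem (hU.mem_nhds hxU)), hrad⟩

/-- If `‖∂^α u‖_{L²(D)} ≤ C_u C^{|α|} max{|α|, k}^{|α|}` for every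
multi-index `α`, then `u` is real-analytic on the bounded open set `D`, and there exists a
constant `c > 0` depending only on `d` (in particular independent of `k` and `C_u`) such
that the Taylor series of `u` at every point of `D` has radius of convergence at least
`c / C`. -/
theorem analytic_of_max_derivative_bounds
    (d : ℕ) (hd : 1 ≤ d) :
    ∃ c : ℝ, 0 < c ∧
      ∀ (D : Set (EuclideanSpace ℝ (Fin d))), IsOpen D → Bornology.IsBounded D →
      ∀ (k : ℝ), 1 ≤ k →
      ∀ (u : EuclideanSpace ℝ (Fin d) → ℂ), ContDiffOn ℝ (⊤ : ℕ∞) u D →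
      ∀ (C Cu : ℝ), 0 < C → 0 < Cu →
      (∀ α : Fin d → ℕ,
        eLpNorm (partialDerivMulti d α u) 2 (volume.restrict D)
          ≤ ENNReal.ofReal
              (Cu * C ^ (∑ i, α i) * max ((∑ i, α i : ℕ) : ℝ) k ^ (∑ i, α i))) →
      (∀ x ∈ D, AnalyticAt ℝ u x) ∧
        ∀ x₀ ∈ D, ∃ p : FormalMultilinearSeries ℝ (EuclideanSpace ℝ (Fin d)) ℂ,
          HasFPowerSeriesAt u p x₀ ∧ ENNReal.ofReal (c / C) ≤ p.radius := by
  have hdpos : (0:ℝ) < d := by exact_mod_cast hd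
  refine ⟨1 / (2 * Real.exp 1 * d), by positivity, ?_⟩
  intro D hD _ k hk u hu C Cu hC hCu h
  have key : ∀ x₀ ∈ D, ∃ p : FormalMultilinearSeries ℝ (EuclideanSpace ℝ (Fin d)) ℂ,
      HasFPowerSeriesAt u p x₀ ∧
        ENNReal.ofReal (1 / (2 * Real.exp 1 * d) / C) ≤ p.radius := by
    intro x₀ hx₀
    rw [div_div]
    exact aux_point hd hD hk hu hC hCu h hx₀
  exact ⟨fun x hx => (key x hx).imp fun p hp => hp.1, key⟩
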